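/- Let n ≥ 3 be an odd integer and let θ_c := min{θ(i,j) : 1 ≤ i, j ≤ n−1}. Then θ_c > 0, and for every θ with 0 < θ < θ_c: the function Φ_n^θ has no critical zero, its nodal set N(Φ_n^θ) is connected, and ℝ² ∖ N(Φ_n^θ) has exactly two connected components (i.e. Φ_n^θ has exactly two nodal domains). -/

import Mathlib

open Polynomial Real Set

/-- Physicists' Hermite polynomials: `H 0 = 1`, `H 1 = 2X`,
`H (n+2) = 2X * H (n+1) - 2(n+1) * H n`. -/
noncomputable def hermiteH : ℕ → Polynomial ℝ
  | 0 => 1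
  | 1 => Polynomial.C 2 * Polynomial.X
  | (n + 2) => Polynomial.C 2 * Polynomial.X * hermiteH (n + 1)
      - Polynomial.C ((2 * (n + 1) : ℕ) : ℝ) * hermiteH n

/-- `z : Fin m → ℝ` enumerates the zeros of `P` in increasing order. -/
def IsZeroEnum (P : Polynomial ℝ) (m : ℕ) (z : Fin m → ℝ) : Prop :=
  StrictMono z ∧ (∀ i, P.eval (z i) = 0) ∧ (∀ x : ℝ, P.eval x = 0 → ∃ i, x = z i)

/-- The eigenfunction `Φ_n^θ`. -/
noncomputable def Phi (n : ℕ) (θ : ℝ) (p : ℝ × ℝ) : ℝ :=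
  (Real.cos θ * (hermiteH n).eval p.1 + Real.sin θ * (hermiteH n).eval p.2) *
    Real.exp (-(p.1 ^ 2 + p.2 ^ 2) / 2)

/-- A critical zero of `u` : a common zero of `u` and its differential. -/
def IsCriticalZero (u : ℝ × ℝ → ℝ) (p : ℝ × ℝ) : Prop :=
  u p = 0 ∧ fderiv ℝ u p = 0

/-- Nodal set of `u`. -/
def nodalSet (u : ℝ × ℝ → ℝ) : Set (ℝ × ℝ) := {p | u p = 0}

/-- The set of nodal domains of `u`, i.e. of connected components of the
complement of the nodal set. -/
def nodalDomains (u : ℝ × ℝ → ℝ) : Set (Set (ℝ × ℝ)) :=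
  {C | ∃ p, u p ≠ 0 ∧ C = connectedComponentIn {q | u q ≠ 0} p}

open Filter Topology

theorem hermiteH_derivative (n : ℕ) :
    derivative (hermiteH (n + 1)) = C (2 * (n + 1 : ℝ)) * hermiteH n := by
  induction n using Nat.strong_induction_on with
  | _ n ih =>
    match n with
    | 0 => simp [hermiteH]
    | 1 =>
      simp only [hermiteH, derivative_sub, derivative_mul, derivative_C, derivative_X,
        derivative_one]
      have h2 : (C 2 : ℝ[X]) = 2 := map_ofNat C 2
      have h4 : (C 4 : ℝ[X]) = 4 := map_ofNat C 4
      norm_num [h2, h4]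
      ring
    | n + 2 =>
      have h1 := ih (n + 1) (by omega)
      have h0 := ih n (by omega)
      rw [hermiteH, derivative_sub, derivative_mul, derivative_mul, h1, derivative_mul, h0]
      simp only [hermiteH, derivative_C, derivative_X]
      push_cast
      simp only [map_mul, map_add, map_natCast, map_ofNat, map_one]
      ring

theorem hermiteH_eval_neg (n : ℕ) (x : ℝ) :
    (hermiteH n).eval (-x) = (-1) ^ n * (hermiteH n).eval x := by
  induction n using Nat.strong_induction_on with
  | _ n ih =>
    match n with
    | 0 => simp [hermiteH]
    | 1 => simp [hermiteH]
    | n + 2 =>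
      have h1 := ih (n + 1) (by omega)
      have h0 := ih n (by omega)
      simp only [hermiteH, eval_sub, eval_mul, eval_C, eval_X, h1, h0]
      ring

theorem hermiteH_eval_succ_ne_zero (n : ℕ) {x : ℝ} (h : (hermiteH n).eval x = 0) :
    (hermiteH (n + 1)).eval x ≠ 0 := by
  induction n with
  | zero => simp [hermiteH] at h
  | succ n ih =>
    intro h'
    rw [hermiteH] at h'
    simp only [eval_sub, eval_mul, eval_C, eval_X, h] at h'
    have hn : (hermiteH n).eval x = 0 := by
      have : (n + 1 : ℝ) ≠ 0 := by positivity
      simpa [this] using h'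
    exact ih hn h

theorem hermiteH_degree_leadingCoeff (n : ℕ) :
    (hermiteH n).degree = n ∧ 0 < (hermiteH n).leadingCoeff := by
  induction n using Nat.strong_induction_on with
  | _ n ih =>
    match n with
    | 0 => simp [hermiteH]
    | 1 => simp [hermiteH, degree_C]
    | n + 2 =>
      obtain ⟨d1, l1⟩ := ih (n + 1) (by omega)
      obtain ⟨d0, l0⟩ := ih n (by omega)
      have hc : (2 : ℝ) ≠ 0 := two_ne_zero
      have hd : (C 2 * X * hermiteH (n + 1)).degree = ((n + 2 : ℕ) : WithBot ℕ) := by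
        rw [degree_mul, degree_C_mul_X hc, d1]
        norm_cast
        omega
      have hlt : (C (((2 * (n + 1) : ℕ) : ℝ)) * hermiteH n).degree
          < (C 2 * X * hermiteH (n + 1)).degree := by
        rw [hd, degree_C_mul (by positivity), d0]
        norm_cast
        omega
      rw [hermiteH]
      refine ⟨(degree_sub_eq_left_of_degree_lt hlt).trans hd, ?_⟩
      rw [leadingCoeff_sub_of_degree_lt hlt]
      simpa using l1

/-- An odd continuously differentiable function that tends to infinity at infinity. -/
structure OddCoercive (f f' : ℝ → ℝ) : Prop where
  hasDerivAt : ∀ x, HasDerivAt f (f' x) x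
  continuous_deriv : Continuous f'
  odd : ∀ x, f (-x) = -f x
  tendsto : Tendsto f atTop atTop

theorem exists_first_zero_right {g : ℝ → ℝ} (hg : Continuous g) {x : ℝ} (hx : 0 < g x) :
    (∀ z, x ≤ z → 0 < g z) ∨ ∃ b, x < b ∧ g b = 0 ∧ ∀ z ∈ Ico x b, 0 < g z := by
  by_cases h : ∃ z, x ≤ z ∧ g z = 0
  · right
    set S := {z | x ≤ z ∧ g z = 0} with hS
    have hcl : IsClosed S := isClosed_Ici.inter (isClosed_eq hg continuous_const)
    have hbd : BddBelow S := ⟨x, fun z hz => hz.1⟩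
    have hmem : sInf S ∈ S := hcl.csInf_mem h hbd
    refine ⟨sInf S, lt_of_le_of_ne hmem.1 ?_, hmem.2, ?_⟩
    · intro he
      have := hmem.2
      rw [← he] at this
      exact hx.ne' this
    · intro z hz
      by_contra! hneg
      obtain ⟨w, hw, hw0⟩ := intermediate_value_Icc' hz.1 hg.continuousOn ⟨hneg, hx.le⟩
      exact absurd (csInf_le hbd (show w ∈ S from ⟨hw.1, hw0⟩)) (by linarith [hw.2, hz.2])
  · left
    push Not at h
    intro z hz
    by_contra! hneg
    obtain ⟨w, hw, hw0⟩ := intermediate_value_Icc' hz hg.continuousOn ⟨hneg, hx.le⟩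
    exact h w hw.1 hw0

namespace OddCoercive

variable {f f' : ℝ → ℝ}

theorem continuous (h : OddCoercive f f') : Continuous f :=
  continuous_iff_continuousAt.2 fun x => (h.hasDerivAt x).continuousAt

theorem deriv_even (h : OddCoercive f f') (x : ℝ) : f' (-x) = f' x := by
  have h1 : HasDerivAt (fun y => f (-y)) (f' (-x) * -1) x :=
    (h.hasDerivAt (-x)).comp x (hasDerivAt_neg x)
  have h2 : HasDerivAt (fun y => f (-y)) (-f' x) x := by
    simp only [h.odd]
    exact (h.hasDerivAt x).neg
  linarith [h1.unique h2]

theorem const_mul (h : OddCoercive f f') {c : ℝ} (hc : 0 < c) :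
    OddCoercive (fun x => c * f x) (fun x => c * f' x) where
  hasDerivAt x := (h.hasDerivAt x).const_mul c
  continuous_deriv := continuous_const.mul h.continuous_deriv
  odd x := by rw [h.odd]; ring
  tendsto := h.tendsto.const_mul_atTop hc

theorem exists_lt_of_le (h : OddCoercive f f') (v y : ℝ) : ∃ a, a < y ∧ f a < v := by
  obtain ⟨b, hb, hb'⟩ :=
    ((h.tendsto.eventually_gt_atTop (-v)).and (eventually_gt_atTop (-y))).exists
  exact ⟨-b, by linarith, by rw [h.odd]; linarith⟩

theorem exists_gt_of_le (h : OddCoercive f f') (v y : ℝ) : ∃ a, y < a ∧ v < f a := by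
  obtain ⟨b, hb, hb'⟩ :=
    ((h.tendsto.eventually_gt_atTop v).and (eventually_gt_atTop y)).exists
  exact ⟨b, hb', hb⟩

theorem surjective (h : OddCoercive f f') : Function.Surjective f := by
  intro v
  obtain ⟨a, ha, ha'⟩ := h.exists_lt_of_le v 0
  obtain ⟨b, hb, hb'⟩ := h.exists_gt_of_le v 0
  obtain ⟨y, -, hy⟩ := intermediate_value_Icc (ha.trans hb).le h.continuous.continuousOn
    ⟨ha'.le, hb'.le⟩
  exact ⟨y, hy⟩

/-- Above all its critical values, `f` is strictly increasing. -/
theorem lt_of_crit_lt (h : OddCoercive f f') {M : ℝ} (hM : ∀ t, f' t = 0 → |f t| ≤ M)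
    {y y' : ℝ} (hy : M < f y) (hyy' : y < y') : f y < f y' := by
  by_contra! hle
  obtain ⟨a, ha, hfa⟩ := h.exists_lt_of_le (f y) y
  have key : ∀ z ∈ Ioo a y', f y ≤ f z → IsMaxOn f (Icc a y') z → False := by
    intro z hz hfz hmax
    have hloc : IsLocalMax f z := hmax.isLocalMax (Icc_mem_nhds hz.1 hz.2)
    have := hM z (hloc.hasDerivAt_eq_zero (h.hasDerivAt z))
    linarith [le_abs_self (f z)]
  obtain ⟨z, hz, hmax⟩ := isCompact_Icc.exists_isMaxOn
    (nonempty_Icc.2 (ha.trans hyy').le) h.continuous.continuousOn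
  have hyz : f y ≤ f z := hmax ⟨ha.le, hyy'.le⟩
  rcases hz.2.lt_or_eq with hlt | rfl
  · refine key z ⟨lt_of_le_of_ne hz.1 ?_, hlt⟩ hyz hmax
    rintro rfl
    linarith
  · exact key y ⟨ha, hyy'⟩ le_rfl fun w hw => (hmax hw).trans hle

/-- Below all its critical values, `f` is strictly increasing. -/
theorem lt_of_lt_neg_crit (h : OddCoercive f f') {M : ℝ} (hM : ∀ t, f' t = 0 → |f t| ≤ M)
    {y y' : ℝ} (hy : f y' < -M) (hyy' : y < y') : f y < f y' := by
  have := h.lt_of_crit_lt hM (y := -y') (y' := -y) (by rw [h.odd]; linarith) (by linarith)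
  rw [h.odd, h.odd] at this
  linarith

theorem eq_of_abs_gt (h : OddCoercive f f') {M : ℝ} (hM : ∀ t, f' t = 0 → |f t| ≤ M)
    {y y' : ℝ} (hy : M < |f y|) (he : f y = f y') : y = y' := by
  rcases lt_abs.1 hy with h1 | h1
  · rcases lt_trichotomy y y' with hl | hl | hl
    · linarith [h.lt_of_crit_lt hM h1 hl]
    · exact hl
    · linarith [h.lt_of_crit_lt hM (he ▸ h1) hl]
  · rcases lt_trichotomy y y' with hl | hl | hl
    · linarith [h.lt_of_lt_neg_crit hM (y := y) (y' := y') (by linarith) hl]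
    · exact hl
    · linarith [h.lt_of_lt_neg_crit hM (y := y') (y' := y) (by linarith) hl]

theorem ordConnected_abs_le (h : OddCoercive f f') {M : ℝ}
    (hM : ∀ t, f' t = 0 → |f t| ≤ M) : OrdConnected {y | |f y| ≤ M} := by
  refine ⟨fun a ha b hb z hz => ?_⟩
  rw [mem_ofPred_eq, abs_le] at ha hb ⊢
  refine ⟨?_, ?_⟩
  · by_contra! hlt
    rcases hz.1.lt_or_eq with hl | rfl
    · linarith [h.lt_of_lt_neg_crit hM hlt hl]
    · linarith
  · by_contra! hlt
    rcases hz.2.lt_or_eq with hl | rfl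
    · linarith [h.lt_of_crit_lt hM hlt hl]
    · linarith

theorem ordConnected_gt (h : OddCoercive f f') {M : ℝ}
    (hM : ∀ t, f' t = 0 → |f t| ≤ M) {v : ℝ} (hv : M < |v|) : OrdConnected {y | v < f y} := by
  refine ⟨fun a ha b hb z hz => ?_⟩
  simp only [mem_ofPred_eq] at ha hb ⊢
  by_contra! hle
  have hl : a < z := lt_of_le_of_ne hz.1 (by rintro rfl; linarith)
  rcases lt_abs.1 hv with h1 | h1
  · linarith [h.lt_of_crit_lt hM (h1.trans ha) hl]
  · linarith [h.lt_of_lt_neg_crit hM (y := a) (y' := z) (by linarith) hl]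

theorem strictMonoOn_Icc (h : OddCoercive f f') {a b : ℝ} (hp : ∀ z ∈ Ioo a b, 0 < f' z) :
    StrictMonoOn f (Icc a b) :=
  strictMonoOn_of_deriv_pos (convex_Icc a b) h.continuous.continuousOn fun z hz => by
    rw [interior_Icc] at hz
    rw [(h.hasDerivAt z).deriv]
    exact hp z hz

theorem strictAntiOn_Icc (h : OddCoercive f f') {a b : ℝ} (hp : ∀ z ∈ Ioo a b, f' z < 0) :
    StrictAntiOn f (Icc a b) :=
  strictAntiOn_of_deriv_neg (convex_Icc a b) h.continuous.continuousOn fun z hz => by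
    rw [interior_Icc] at hz
    rw [(h.hasDerivAt z).deriv]
    exact hp z hz

theorem exists_right_of_deriv_pos (h : OddCoercive f f') {m : ℝ}
    (hm : ∀ t, f' t = 0 → m ≤ |f t|) {x : ℝ} (hx : 0 < f' x) (hfx : -m < f x) :
    ∃ b, x < b ∧ m ≤ f b ∧ ∀ z ∈ Ico x b, 0 < f' z := by
  rcases exists_first_zero_right h.continuous_deriv hx with hall | ⟨b, hxb, hb, hpos⟩
  · obtain ⟨b, hxb, hb⟩ := h.exists_gt_of_le m x
    exact ⟨b, hxb, hb.le, fun z hz => hall z hz.1⟩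
  · refine ⟨b, hxb, ?_, hpos⟩
    have hlt := h.strictMonoOn_Icc (fun z hz => hpos z ⟨hz.1.le, hz.2⟩)
      (left_mem_Icc.2 hxb.le) (right_mem_Icc.2 hxb.le) hxb
    rcases le_abs.1 (hm b hb) with h1 | h1 <;> linarith

theorem exists_right_of_deriv_neg (h : OddCoercive f f') {m : ℝ}
    (hm : ∀ t, f' t = 0 → m ≤ |f t|) {x : ℝ} (hx : f' x < 0) (hfx : f x < m) :
    ∃ b, x < b ∧ f b ≤ -m ∧ ∀ z ∈ Ico x b, f' z < 0 := by
  rcases exists_first_zero_right h.continuous_deriv.neg (neg_pos.2 hx) with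
    hall | ⟨b, hxb, hb, hpos⟩
  · obtain ⟨b, hxb, hb⟩ := h.exists_gt_of_le (f x) x
    have hlt := h.strictAntiOn_Icc (a := x) (b := b) (fun z hz => neg_pos.1 (hall z hz.1.le))
      (left_mem_Icc.2 hxb.le) (right_mem_Icc.2 hxb.le) hxb
    linarith
  · have hneg : ∀ z ∈ Ico x b, f' z < 0 := fun z hz => neg_pos.1 (hpos z hz)
    refine ⟨b, hxb, ?_, hneg⟩
    have hlt := h.strictAntiOn_Icc (fun z hz => hneg z ⟨hz.1.le, hz.2⟩)
      (left_mem_Icc.2 hxb.le) (right_mem_Icc.2 hxb.le) hxb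
    rcases le_abs.1 (hm b (neg_eq_zero.1 hb)) with h1 | h1 <;> linarith

/-- A point whose value is smaller than all critical values lies in an interval of strict
monotonicity which `f` maps over `[-m, m]`. -/
theorem exists_monotone_interval (h : OddCoercive f f') {m : ℝ}
    (hm : ∀ t, f' t = 0 → m ≤ |f t|) {x : ℝ} (hx : |f x| < m) :
    ∃ a b, x ∈ Icc a b ∧
      ((StrictMonoOn f (Icc a b) ∧ f a ≤ -m ∧ m ≤ f b) ∨
        (StrictAntiOn f (Icc a b) ∧ m ≤ f a ∧ f b ≤ -m)) := by
  obtain ⟨hx1, hx2⟩ := abs_lt.1 hx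
  rcases lt_trichotomy (f' x) 0 with hneg | h0 | hpos
  · obtain ⟨b, hxb, hb, hb'⟩ := h.exists_right_of_deriv_neg hm hneg hx2
    obtain ⟨a, hxa, ha, ha'⟩ := h.exists_right_of_deriv_neg hm (x := -x)
      (by rwa [h.deriv_even]) (by rw [h.odd]; linarith)
    refine ⟨-a, b, ⟨by linarith, hxb.le⟩, Or.inr ⟨h.strictAntiOn_Icc fun z hz => ?_, ?_, hb⟩⟩
    · rcases le_total x z with hxz | hxz
      · exact hb' z ⟨hxz, hz.2⟩
      · rw [← h.deriv_even]
        exact ha' _ ⟨by linarith, by linarith [hz.1]⟩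
    · rw [h.odd]; linarith
  · linarith [hm x h0]
  · obtain ⟨b, hxb, hb, hb'⟩ := h.exists_right_of_deriv_pos hm hpos hx1
    obtain ⟨a, hxa, ha, ha'⟩ := h.exists_right_of_deriv_pos hm (x := -x)
      (by rwa [h.deriv_even]) (by rw [h.odd]; linarith)
    refine ⟨-a, b, ⟨by linarith, hxb.le⟩, Or.inl ⟨h.strictMonoOn_Icc fun z hz => ?_, ?_, hb⟩⟩
    · rcases le_total x z with hxz | hxz
      · exact hb' z ⟨hxz, hz.2⟩
      · rw [← h.deriv_even]
        exact ha' _ ⟨by linarith, by linarith [hz.1]⟩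
    · rw [h.odd]; linarith

theorem exists_injOn_interval (h : OddCoercive f f') {m : ℝ}
    (hm : ∀ t, f' t = 0 → m ≤ |f t|) {x : ℝ} (hx : |f x| < m) :
    ∃ a b, x ∈ Icc a b ∧ InjOn f (Icc a b) ∧ Icc (-m) m ⊆ f '' Icc a b := by
  obtain ⟨a, b, hxab, ⟨hmono, ha, hb⟩ | ⟨hanti, ha, hb⟩⟩ := h.exists_monotone_interval hm hx
  · exact ⟨a, b, hxab, hmono.injOn, (Icc_subset_Icc ha hb).trans
      (intermediate_value_Icc (hxab.1.trans hxab.2) h.continuous.continuousOn)⟩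
  · exact ⟨a, b, hxab, hanti.injOn, (Icc_subset_Icc hb ha).trans
      (intermediate_value_Icc' (hxab.1.trans hxab.2) h.continuous.continuousOn)⟩

theorem exists_ascent (h : OddCoercive f f') {m : ℝ}
    (hm : ∀ t, f' t = 0 → m ≤ |f t|) {x : ℝ} (hx : |f x| < m) :
    ∃ x', m ≤ f x' ∧ ∀ z ∈ uIcc x x', f x ≤ f z := by
  obtain ⟨a, b, hxab, ⟨hmono, ha, hb⟩ | ⟨hanti, ha, hb⟩⟩ := h.exists_monotone_interval hm hx
  · refine ⟨b, hb, fun z hz => ?_⟩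
    rw [uIcc_of_le hxab.2] at hz
    exact hmono.monotoneOn hxab ⟨hxab.1.trans hz.1, hz.2⟩ hz.1
  · refine ⟨a, ha, fun z hz => ?_⟩
    rw [uIcc_of_ge hxab.1] at hz
    exact hanti.antitoneOn ⟨hz.1, hz.2.trans hxab.2⟩ hxab hz.2

theorem exists_abs_le_of_abs_le (h : OddCoercive f f') (v : ℝ) :
    ∃ R, ∀ y, |f y| ≤ v → |y| ≤ R := by
  obtain ⟨R, hR⟩ := (h.tendsto.eventually_gt_atTop v).exists_forall_of_atTop
  refine ⟨R, fun y hy => ?_⟩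
  obtain ⟨h1, h2⟩ := abs_le.1 hy
  by_contra! hlt
  rcases lt_abs.1 hlt with hl | hl
  · linarith [hR y hl.le]
  · have := hR (-y) hl.le
    rw [h.odd] at this
    linarith

end OddCoercive

/-- A quotient map to a preconnected space has a preconnected source as soon as any two points of
a fibre lie in the same connected component. -/
theorem Topology.IsQuotientMap.preconnectedSpace_of_fiber {X Y : Type*} [TopologicalSpace X]
    [TopologicalSpace Y] [PreconnectedSpace Y] {q : X → Y} (hq : IsQuotientMap q)
    (hfib : ∀ x x', q x = q x' → x' ∈ connectedComponent x) : PreconnectedSpace X := by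
  rw [preconnectedSpace_iff_clopen]
  intro s hs
  have hpre : q ⁻¹' (q '' s) = s := by
    refine (subset_preimage_image q s).antisymm' ?_
    rintro x ⟨x', hx', he⟩
    exact hs.connectedComponent_subset hx' (hfib x' x he)
  have hcl : IsClopen (q '' s) :=
    ⟨hq.isClosed_preimage.1 (hpre.symm ▸ hs.1), hq.isOpen_preimage.1 (hpre.symm ▸ hs.2)⟩
  rcases isClopen_iff.1 hcl with h | h
  · left; rw [← hpre, h, preimage_empty]
  · right; rw [← hpre, h, preimage_univ]

theorem mem_connectedComponent_subtype {X : Type*} [TopologicalSpace X] {S T : Set X}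
    (hT : IsPreconnected T) (hTS : T ⊆ S) (p q : S) (hp : (p : X) ∈ T) (hq : (q : X) ∈ T) :
    q ∈ connectedComponent p := by
  have hT' : IsPreconnected ((↑) ⁻¹' T : Set S) := by
    rw [← Topology.IsInducing.subtypeVal.isPreconnected_image, Subtype.image_preimage_coe,
      inter_eq_self_of_subset_right hTS]
    exact hT
  exact hT'.subset_connectedComponent hp hq

section Separated

variable {f f' g g' : ℝ → ℝ} {m M : ℝ}

theorem isPreconnected_zeroSet_strip (hf : OddCoercive f f') (hg : OddCoercive g g')
    (hM : ∀ t, g' t = 0 → |g t| ≤ M) {a b : ℝ} (hinj : InjOn f (Icc a b))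
    (hsurj : Icc (-M) M ⊆ f '' Icc a b) :
    IsPreconnected {p : ℝ × ℝ | p.1 ∈ Icc a b ∧ |g p.2| ≤ M ∧ f p.1 + g p.2 = 0} := by
  set S := {p : ℝ × ℝ | p.1 ∈ Icc a b ∧ |g p.2| ≤ M ∧ f p.1 + g p.2 = 0} with hS
  have hfc := hf.continuous
  have hgc := hg.continuous
  have hcl : IsClosed S := by
    refine (isClosed_Icc.preimage continuous_fst).inter
      ((isClosed_le (f := fun p : ℝ × ℝ => |g p.2|) (by fun_prop) continuous_const).inter
        (isClosed_eq (f := fun p : ℝ × ℝ => f p.1 + g p.2) (by fun_prop) continuous_const))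
  obtain ⟨R, hR⟩ := hg.exists_abs_le_of_abs_le M
  have hcomp : IsCompact S :=
    (isCompact_Icc.prod isCompact_Icc).of_isClosed_subset hcl
      fun p hp => ⟨hp.1, abs_le.1 (hR _ hp.2.1)⟩
  have : CompactSpace S := isCompact_iff_compactSpace.1 hcomp
  have : PreconnectedSpace {y | |g y| ≤ M} :=
    isPreconnected_iff_preconnectedSpace.1 (hg.ordConnected_abs_le hM).isPreconnected
  set q : S → {y | |g y| ≤ M} := fun p => ⟨p.1.2, p.2.2.1⟩ with hq
  have hqc : Continuous q := by fun_prop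
  have hqs : Function.Surjective q := by
    rintro ⟨y, hy⟩
    obtain ⟨x, hx, hxy⟩ := hsurj (show -g y ∈ Icc (-M) M by
      rw [mem_ofPred_eq, abs_le] at hy
      exact ⟨by linarith [hy.2], by linarith [hy.1]⟩)
    exact ⟨⟨(x, y), hx, hy, by simp [hxy]⟩, rfl⟩
  refine isPreconnected_iff_preconnectedSpace.2
    ((hqc.isClosedMap.isQuotientMap hqc hqs).preconnectedSpace_of_fiber fun p p' he => ?_)
  have h2 : p.1.2 = p'.1.2 := congrArg Subtype.val he
  have h1 : p.1.1 = p'.1.1 := by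
    refine hinj p.2.1 p'.2.1 ?_
    have e1 := p.2.2.2
    have e2 := p'.2.2.2
    rw [h2] at e1
    linarith
  have : p = p' := Subtype.ext (Prod.ext h1 h2)
  exact this ▸ mem_connectedComponent

theorem isConnected_zeroSet (hf : OddCoercive f f') (hg : OddCoercive g g')
    (hm : ∀ t, f' t = 0 → m ≤ |f t|) (hM : ∀ t, g' t = 0 → |g t| ≤ M) (hMm : M < m) :
    IsConnected {p : ℝ × ℝ | f p.1 + g p.2 = 0} := by
  set S := {p : ℝ × ℝ | f p.1 + g p.2 = 0} with hS
  have hfc := hf.continuous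
  have hgc := hg.continuous
  have hcl : IsClosed S := isClosed_eq (by fun_prop) continuous_const
  set q : S → ℝ := fun p => p.1.1 with hq
  have hqc : Continuous q := by fun_prop
  have hqs : Function.Surjective q := by
    intro x
    obtain ⟨y, hy⟩ := hg.surjective (-f x)
    exact ⟨⟨(x, y), by simp [hS, hy]⟩, rfl⟩
  have hqp : IsProperMap q := by
    rw [isProperMap_iff_isCompact_preimage]
    refine ⟨hqc, fun K hK => ?_⟩
    obtain ⟨v, hv⟩ := (hK.image hfc).isBounded.exists_norm_le
    obtain ⟨R, hR⟩ := hg.exists_abs_le_of_abs_le v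
    rw [Subtype.isCompact_iff]
    refine (hK.prod (isCompact_Icc (a := -R) (b := R))).of_isClosed_subset ?_ ?_
    · exact hcl.isClosedEmbedding_subtypeVal.isClosedMap _ (hK.isClosed.preimage hqc)
    · rintro _ ⟨p, hp, rfl⟩
      refine ⟨hp, abs_le.1 (hR _ ?_)⟩
      have h1 := hv _ (mem_image_of_mem f hp)
      have h2 : f p.1.1 + g p.1.2 = 0 := p.2
      rw [show g p.1.2 = -f p.1.1 by linarith, abs_neg]
      exact h1
  refine ⟨⟨_, (hqs 0).choose.2⟩, isPreconnected_iff_preconnectedSpace.2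
    ((hqp.isClosedMap.isQuotientMap hqc hqs).preconnectedSpace_of_fiber fun p p' he => ?_)⟩
  have h1 : p.1.1 = p'.1.1 := he
  have hp : f p.1.1 + g p.1.2 = 0 := p.2
  have hp' : f p'.1.1 + g p'.1.2 = 0 := p'.2
  have hgg : g p.1.2 = g p'.1.2 := by rw [h1] at hp; linarith
  rcases lt_or_ge M |g p.1.2| with hlt | hle
  · have : p = p' := Subtype.ext (Prod.ext h1 (hg.eq_of_abs_gt hM hlt hgg))
    exact this ▸ mem_connectedComponent
  · have hfx : |f p.1.1| ≤ M := by
      rwa [show f p.1.1 = -g p.1.2 by linarith, abs_neg]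
    obtain ⟨a, b, hxab, hinj, hsurj⟩ := hf.exists_injOn_interval hm (hfx.trans_lt hMm)
    refine mem_connectedComponent_subtype (isPreconnected_zeroSet_strip hf hg hM hinj
      ((Icc_subset_Icc (by linarith) hMm.le).trans hsurj)) (fun p hp => hp.2.2) p p'
      ⟨hxab, hle, hp⟩ ⟨h1 ▸ hxab, hgg ▸ hle, hp'⟩

theorem isConnected_posSet (hf : OddCoercive f f') (hg : OddCoercive g g')
    (hm : ∀ t, f' t = 0 → m ≤ |f t|) (hM : ∀ t, g' t = 0 → |g t| ≤ M) (hMm : M < m) :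
    IsConnected {p : ℝ × ℝ | 0 < f p.1 + g p.2} := by
  set S := {p : ℝ × ℝ | 0 < f p.1 + g p.2} with hS
  have hfc := hf.continuous
  have hgc := hg.continuous
  have hop : IsOpen S := isOpen_lt continuous_const (by fun_prop)
  set q : S → ℝ := fun p => p.1.1 with hq
  have hqc : Continuous q := by fun_prop
  have hqs : Function.Surjective q := by
    intro x
    obtain ⟨y, hy⟩ := hg.surjective (-f x + 1)
    exact ⟨⟨(x, y), by simp [hS, hy]⟩, rfl⟩
  have hqo : IsOpenMap q := isOpenMap_fst.comp hop.isOpenEmbedding_subtypeVal.isOpenMap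
  have hvert : ∀ x, M < |f x| → IsPreconnected ((fun y => (x, y)) '' {y | -f x < g y}) :=
    fun x hx => (hg.ordConnected_gt hM (by rwa [abs_neg])).isPreconnected.image _
      (by fun_prop)
  have hvertS : ∀ x, (fun y => (x, y)) '' {y | -f x < g y} ⊆ S := by
    rintro x _ ⟨y, hy, rfl⟩
    simp only [mem_ofPred_eq] at hy
    simp only [hS, mem_ofPred_eq]
    linarith
  refine ⟨⟨_, (hqs 0).choose.2⟩, isPreconnected_iff_preconnectedSpace.2
    ((hqo.isQuotientMap hqc hqs).preconnectedSpace_of_fiber ?_)⟩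
  rintro ⟨⟨x, y⟩, hp⟩ ⟨⟨x', y'⟩, hp'⟩ he
  obtain rfl : x = x' := he
  simp only [hS, mem_ofPred_eq] at hp hp'
  rcases lt_or_ge M |f x| with hlt | hle
  · exact mem_connectedComponent_subtype (hvert x hlt) (hvertS x) _ _
      ⟨y, by simp only [mem_ofPred_eq]; linarith, rfl⟩
      ⟨y', by simp only [mem_ofPred_eq]; linarith, rfl⟩
  · obtain ⟨x', hx', hasc⟩ := hf.exists_ascent hm (hle.trans_lt hMm)
    have hfx' : f x ≤ f x' := hasc x' right_mem_uIcc
    have hseg : ∀ w : ℝ, IsPreconnected ((fun z : ℝ => (z, w)) '' uIcc x x') :=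
      fun w => isPreconnected_uIcc.image _ (Continuous.prodMk_left w).continuousOn
    have hsegS : ∀ w, 0 < f x + g w → (fun z : ℝ => (z, w)) '' uIcc x x' ⊆ S := by
      rintro w hw _ ⟨z, hz, rfl⟩
      have := hasc z hz
      simp only [hS, mem_ofPred_eq]
      linarith
    have hmemV : ∀ w, 0 < f x + g w → (x', w) ∈ (fun y => (x', y)) '' {y | -f x' < g y} :=
      fun w hw => ⟨w, by simp only [mem_ofPred_eq]; linarith, rfl⟩
    have hends : ∀ w : ℝ, (x, w) ∈ (fun z : ℝ => (z, w)) '' uIcc x x' ∧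
        (x', w) ∈ (fun z : ℝ => (z, w)) '' uIcc x x' :=
      fun w => ⟨⟨x, left_mem_uIcc, rfl⟩, ⟨x', right_mem_uIcc, rfl⟩⟩
    have hV := hvert x' (lt_of_lt_of_le (hMm.trans_le hx') (le_abs_self _))
    have hT := ((hseg y).union (x', y) (hends y).2 (hmemV y hp) hV).union
      (x', y') (mem_union_right _ (hmemV y' hp')) (hends y').2 (hseg y')
    exact mem_connectedComponent_subtype hT
      (union_subset (union_subset (hsegS y hp) (hvertS x')) (hsegS y' hp')) _ _
      (mem_union_left _ (mem_union_left _ (hends y).1))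
      (mem_union_right _ (hends y').1)

theorem isConnected_negSet (hf : OddCoercive f f') (hg : OddCoercive g g')
    (hm : ∀ t, f' t = 0 → m ≤ |f t|) (hM : ∀ t, g' t = 0 → |g t| ≤ M) (hMm : M < m) :
    IsConnected {p : ℝ × ℝ | f p.1 + g p.2 < 0} := by
  convert (isConnected_posSet hf hg hm hM hMm).image (fun p => -p)
    (by fun_prop : Continuous fun p : ℝ × ℝ => -p).continuousOn using 1
  ext p
  rw [image_neg_eq_neg]
  simp only [mem_ofPred_eq, Set.mem_neg, Prod.fst_neg, Prod.snd_neg, hf.odd, hg.odd]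
  constructor <;> intro h <;> linarith

end Separated

theorem connectedComponentIn_ne_zero_eq {X : Type*} [TopologicalSpace X] {u : X → ℝ}
    (hu : Continuous u) {S : Set X} (hS : IsPreconnected S) {p : X} (hp : p ∈ S)
    (hSu : ∀ q, q ∈ S ↔ 0 < u q * u p) : connectedComponentIn {q | u q ≠ 0} p = S := by
  have hup : u p ≠ 0 := fun h => by simpa [h] using (hSu p).1 hp
  refine Subset.antisymm (fun q hq => ?_) (hS.subset_connectedComponentIn hp fun q hq h => by
    simpa [h] using (hSu q).1 hq)
  by_contra hqS
  rw [hSu, not_lt] at hqS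
  have hpre : IsPreconnected (connectedComponentIn {q | u q ≠ 0} p) :=
    isPreconnected_connectedComponentIn
  obtain ⟨z, hz, hz0⟩ := hpre.intermediate_value hq (mem_connectedComponentIn hup)
    (hu.mul continuous_const).continuousOn (f := fun q => u q * u p)
    ⟨hqS, (mul_self_pos.2 hup).le⟩
  exact mul_ne_zero (connectedComponentIn_subset _ _ hz) hup hz0

theorem ncard_nodalDomains_eq_two {u : ℝ × ℝ → ℝ} (hu : Continuous u)
    (hpos : IsConnected {p | 0 < u p}) (hneg : IsConnected {p | u p < 0}) :
    (nodalDomains u).ncard = 2 := by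
  have hp : ∀ p, 0 < u p → connectedComponentIn {q | u q ≠ 0} p = {p | 0 < u p} :=
    fun p h => connectedComponentIn_ne_zero_eq hu hpos.2 h fun q =>
      (mul_pos_iff_of_pos_right h).symm
  have hn : ∀ p, u p < 0 → connectedComponentIn {q | u q ≠ 0} p = {p | u p < 0} :=
    fun p h => connectedComponentIn_ne_zero_eq hu hneg.2 h fun q =>
      ⟨fun hq => mul_pos_of_neg_of_neg hq h, fun hq => neg_of_mul_pos_left hq h.le⟩
  obtain ⟨a, ha⟩ := hpos.1
  obtain ⟨b, hb⟩ := hneg.1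
  have : nodalDomains u = {{p | 0 < u p}, {p | u p < 0}} := by
    ext D
    simp only [nodalDomains, mem_ofPred_eq, mem_insert_iff, mem_singleton_iff]
    constructor
    · rintro ⟨p, h, rfl⟩
      rcases h.lt_or_gt with h | h
      · exact Or.inr (hn p h)
      · exact Or.inl (hp p h)
    · rintro (rfl | rfl)
      · exact ⟨a, ne_of_gt ha, (hp a ha).symm⟩
      · exact ⟨b, ne_of_lt hb, (hn b hb).symm⟩
  rw [this, ncard_pair]
  intro he
  have hmem : a ∈ {p | u p < 0} := he ▸ ha
  rw [mem_ofPred_eq] at ha hmem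
  exact lt_asymm ha hmem

theorem hermiteH_hasDerivAt (n : ℕ) (x : ℝ) :
    HasDerivAt (fun y => (hermiteH (n + 1)).eval y)
      (2 * (n + 1 : ℝ) * (hermiteH n).eval x) x := by
  have := (hermiteH (n + 1)).hasDerivAt x
  rwa [hermiteH_derivative, eval_mul, eval_C] at this

theorem hermiteH_oddCoercive {n : ℕ} (hn : Odd (n + 1)) :
    OddCoercive (fun x => (hermiteH (n + 1)).eval x)
      (fun x => 2 * (n + 1 : ℝ) * (hermiteH n).eval x) where
  hasDerivAt := hermiteH_hasDerivAt n
  continuous_deriv := by fun_prop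
  odd x := by simp [hermiteH_eval_neg, hn.neg_one_pow]
  tendsto := by
    obtain ⟨hd, hl⟩ := hermiteH_degree_leadingCoeff (n + 1)
    refine tendsto_atTop_of_leadingCoeff_nonneg _ ?_ hl.le
    rw [hd]
    exact_mod_cast n.succ_pos

theorem Phi_continuous (n : ℕ) (θ : ℝ) : Continuous (Phi n θ) := by
  unfold Phi
  fun_prop

theorem IsCriticalZero.eval_eq_zero {n : ℕ} {θ : ℝ} {p : ℝ × ℝ}
    (h : IsCriticalZero (Phi (n + 1) θ) p) :
    cos θ * (hermiteH n).eval p.1 = 0 ∧ sin θ * (hermiteH n).eval p.2 = 0 := by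
  obtain ⟨h0, hd⟩ := h
  have hval : cos θ * (hermiteH (n + 1)).eval p.1 + sin θ * (hermiteH (n + 1)).eval p.2 = 0 :=
    (mul_eq_zero.1 h0).resolve_right (exp_ne_zero _)
  have h1 : HasFDerivAt (fun q : ℝ × ℝ => (hermiteH (n + 1)).eval q.1)
      ((2 * (n + 1 : ℝ) * (hermiteH n).eval p.1) • ContinuousLinearMap.fst ℝ ℝ ℝ) p :=
    (hermiteH_hasDerivAt n p.1).comp_hasFDerivAt p hasFDerivAt_fst
  have h2 : HasFDerivAt (fun q : ℝ × ℝ => (hermiteH (n + 1)).eval q.2)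
      ((2 * (n + 1 : ℝ) * (hermiteH n).eval p.2) • ContinuousLinearMap.snd ℝ ℝ ℝ) p :=
    (hermiteH_hasDerivAt n p.2).comp_hasFDerivAt p hasFDerivAt_snd
  have h3 : DifferentiableAt ℝ (fun q : ℝ × ℝ => exp (-(q.1 ^ 2 + q.2 ^ 2) / 2)) p := by
    fun_prop
  have h4 : HasFDerivAt (Phi (n + 1) θ) _ p :=
    ((h1.const_mul (cos θ)).add (h2.const_mul (sin θ))).mul h3.hasFDerivAt
  rw [h4.fderiv] at hd
  have e1 := congrArg (fun L => L ((1 : ℝ), (0 : ℝ))) hd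
  have e2 := congrArg (fun L => L ((0 : ℝ), (1 : ℝ))) hd
  simp [hval, exp_ne_zero] at e1 e2
  have hn' : (n + 1 : ℝ) ≠ 0 := by positivity
  constructor
  · simpa [hn', or_assoc] using e1
  · simpa [hn', or_assoc] using e2

/-- Let `n ≥ 3` be odd, `tz` enumerate the zeros of `H_{n-1}`,
and for `i j`, let `Θ i j ∈ (0,π)` be the unique angle with
`cos (Θ i j) * H_n(tz i) + sin (Θ i j) * H_n(tz j) = 0`. Let `θc` be the least of
the `Θ i j`. Then `θc > 0` and for all `0 < θ < θc`, `Φ_n^θ` has no critical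
zero, its nodal set is connected, and it has exactly two nodal domains. -/
theorem below_first_critical_value_two_nodal_domains
    (n : ℕ) (hn3 : 3 ≤ n) (hodd : Odd n)
    (tz : Fin (n - 1) → ℝ) (htz : IsZeroEnum (hermiteH (n - 1)) (n - 1) tz)
    (Θ : Fin (n - 1) → Fin (n - 1) → ℝ)
    (hΘ : ∀ i j, Θ i j ∈ Set.Ioo 0 π ∧
      Real.cos (Θ i j) * (hermiteH n).eval (tz i)
        + Real.sin (Θ i j) * (hermiteH n).eval (tz j) = 0)
    (θc : ℝ) (hθc : IsLeast {x : ℝ | ∃ i j, x = Θ i j} θc) :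
    0 < θc ∧ ∀ θ : ℝ, 0 < θ → θ < θc →
      (∀ p : ℝ × ℝ, ¬ IsCriticalZero (Phi n θ) p) ∧
      IsConnected (nodalSet (Phi n θ)) ∧
      (nodalDomains (Phi n θ)).ncard = 2 := by
  obtain ⟨n, rfl⟩ : ∃ k, n = k + 1 := ⟨n - 1, by omega⟩
  simp only [Nat.add_sub_cancel] at *
  obtain ⟨⟨i₀, j₀, rfl⟩, hleast⟩ := hθc
  refine ⟨(hΘ i₀ j₀).1.1, fun θ hθ0 hθc => ?_⟩
  obtain ⟨-, hz, hz'⟩ := htz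
  have hodd' : ∀ x, (hermiteH (n + 1)).eval (-x) = -(hermiteH (n + 1)).eval x :=
    (hermiteH_oddCoercive hodd).odd
  have hs : 0 < sin θ := sin_pos_of_pos_of_lt_pi hθ0 (hθc.trans (hΘ i₀ j₀).1.2)
  have hsign : ∀ i j, ∃ r : ℝ, 0 < r ∧ cos θ * (hermiteH (n + 1)).eval (tz i)
      + sin θ * (hermiteH (n + 1)).eval (tz j) = r * (hermiteH (n + 1)).eval (tz i) := by
    intro i j
    obtain ⟨⟨h0, hpi⟩, he⟩ := hΘ i j
    have hlt : θ < Θ i j := hθc.trans_le (hleast ⟨i, j, rfl⟩)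
    have hsΘ := sin_pos_of_pos_of_lt_pi h0 hpi
    refine ⟨sin (Θ i j - θ) / sin (Θ i j), div_pos
      (sin_pos_of_pos_of_lt_pi (by linarith) (by linarith)) hsΘ, ?_⟩
    rw [sin_sub]
    field_simp
    linear_combination sin θ * he
  have hlt : ∀ i j, sin θ * |(hermiteH (n + 1)).eval (tz j)|
      < cos θ * |(hermiteH (n + 1)).eval (tz i)| := by
    intro i j
    obtain ⟨j', hj'⟩ := hz' (-tz j) (by rw [hermiteH_eval_neg, hz, mul_zero])
    obtain ⟨r, hr, h1⟩ := hsign i j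
    obtain ⟨r', hr', h2⟩ := hsign i j'
    rw [← hj', hodd'] at h2
    rcases lt_or_gt_of_ne (hermiteH_eval_succ_ne_zero n (hz i)) with hi | hi
    · have := mul_neg_of_pos_of_neg hr hi
      have := mul_neg_of_pos_of_neg hr' hi
      rw [abs_of_neg hi]
      rcases abs_cases ((hermiteH (n + 1)).eval (tz j)) with ⟨e, -⟩ | ⟨e, -⟩ <;> rw [e] <;>
        linarith
    · have := mul_pos hr hi
      have := mul_pos hr' hi
      rw [abs_of_pos hi]
      rcases abs_cases ((hermiteH (n + 1)).eval (tz j)) with ⟨e, -⟩ | ⟨e, -⟩ <;> rw [e] <;>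
        linarith
  have hc : 0 < cos θ :=
    pos_of_mul_pos_left ((mul_nonneg hs.le (abs_nonneg _)).trans_lt (hlt i₀ i₀)) (abs_nonneg _)
  have : Nonempty (Fin (n + 1 - 1)) := ⟨i₀⟩
  obtain ⟨im, him⟩ := Finite.exists_min fun i => |(hermiteH (n + 1)).eval (tz i)|
  obtain ⟨iM, hiM⟩ := Finite.exists_max fun i => |(hermiteH (n + 1)).eval (tz i)|
  have hf := (hermiteH_oddCoercive hodd).const_mul hc
  have hg := (hermiteH_oddCoercive hodd).const_mul hs
  have hn : (2 * (n + 1 : ℝ)) ≠ 0 := by positivity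
  have hm : ∀ t, cos θ * (2 * (n + 1 : ℝ) * (hermiteH n).eval t) = 0 →
      cos θ * |(hermiteH (n + 1)).eval (tz im)| ≤ |cos θ * (hermiteH (n + 1)).eval t| := by
    intro t ht
    obtain ⟨i, rfl⟩ := hz' t
      ((mul_eq_zero.1 ((mul_eq_zero.1 ht).resolve_left hc.ne')).resolve_left hn)
    rw [abs_mul, abs_of_pos hc]
    exact mul_le_mul_of_nonneg_left (him i) hc.le
  have hM : ∀ t, sin θ * (2 * (n + 1 : ℝ) * (hermiteH n).eval t) = 0 →
      |sin θ * (hermiteH (n + 1)).eval t| ≤ sin θ * |(hermiteH (n + 1)).eval (tz iM)| := by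
    intro t ht
    obtain ⟨i, rfl⟩ := hz' t
      ((mul_eq_zero.1 ((mul_eq_zero.1 ht).resolve_left hs.ne')).resolve_left hn)
    rw [abs_mul, abs_of_pos hs]
    exact mul_le_mul_of_nonneg_left (hiM i) hs.le
  have hMm := hlt im iM
  refine ⟨fun p hp => ?_, ?_, ncard_nodalDomains_eq_two (Phi_continuous _ _) ?_ ?_⟩
  · obtain ⟨h1, h2⟩ := hp.eval_eq_zero
    have h0 : cos θ * (hermiteH (n + 1)).eval p.1 + sin θ * (hermiteH (n + 1)).eval p.2 = 0 :=
      (mul_eq_zero.1 hp.1).resolve_right (exp_ne_zero _)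
    obtain ⟨i, hi⟩ := hz' _ ((mul_eq_zero.1 h1).resolve_left hc.ne')
    obtain ⟨j, hj⟩ := hz' _ ((mul_eq_zero.1 h2).resolve_left hs.ne')
    have hij := hlt i j
    have heq := congrArg abs (eq_neg_of_add_eq_zero_left h0)
    rw [abs_neg, abs_mul, abs_mul, abs_of_pos hc, abs_of_pos hs, hi, hj] at heq
    exact hij.ne' heq
  · convert isConnected_zeroSet hf hg hm hM hMm using 1
    ext p
    simp [nodalSet, Phi, exp_ne_zero]
  · convert isConnected_posSet hf hg hm hM hMm using 1
    ext p
    exact mul_pos_iff_of_pos_right (exp_pos _)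
  · convert isConnected_negSet hf hg hm hM hMm using 1
    ext p
    exact ⟨fun h => neg_of_mul_neg_left h (exp_pos _).le,
      fun h => mul_neg_of_neg_of_pos h (exp_pos _)⟩
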